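/- There exists an absolute constant c > 0 such that for every finite set A ⊂ ℝ with 0 ∉ A and |A| ≥ 2, |(AA+1)(AA+1)| ≥ c · |A|² / log |A|. -/

import Mathlib

/-!
Write `S = (AA+1)(AA+1)`. Apply Cauchy–Schwarz to the map `(b, c, a, d) ↦ (b, c, (ab+1)(cd+1))` on
the quadruples of `A` with `ab+1 ≠ 0` and `cd+1 ≠ 0`. It bounds `|S|` below by `|A|⁶ / E` up to a
constant, where `E` counts the solutions of `(ab+1)(cd+1) = (a'b+1)(cd'+1)` with nonzero sides.
Such a solution says that the points `(a, d')`, `(a', d)` and `(-1/b, -1/c)` are collinear. Apart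
from the `|A|⁴` solutions where the first two points coincide, the line through them is not parallel
to an axis. So it suffices to show that the grid `X × X` with `X = A ∪ (-1/A)`, `n = |X|`, has
`O(n⁴ log n)` collinear triples on lines not parallel to an axis (`sum_card_linePts_cube_le`).

For this grid no incidence theorem is needed. Measure distance between grid points by the sum of the
rank differences of the two coordinates. Along a line the ranks are monotone, so the distances `dᵢ`
between consecutive points of a line with `k` grid points add up to at most `2n`, and convexity
gives `∑ 1/dᵢ² ≥ (k-1)³ / (2n)²` (`gap_sum`). Two distinct points lie on one line only, so summing
over all lines bounds `∑ (k-1)³` by `4n² ∑ 1/d(P,Q)²` over all pairs of grid points that differ in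
both coordinates, and the last sum is at most `4 n² H_n` (`sum_rank_dist_le`), with `H_n` the
harmonic number.
-/

open Finset Pointwise

/-- For a finite set `A ⊆ ℝ`, the set `AA + 1 = {x * y + 1 : x, y ∈ A}`. -/
noncomputable def prodShiftOne (A : Finset ℝ) : Finset ℝ := Finset.image₂ (fun x y => x * y + 1) A A

/-- The number of elements of `X` below `x`. -/
noncomputable def rankIn (X : Finset ℝ) (x : ℝ) : ℕ := (X.filter (· < x)).card

/-- The abscissae of the points of the grid `X × X` on the line `y = l.1 * x + l.2`. -/
noncomputable def linePts (X : Finset ℝ) (l : ℝ × ℝ) : Finset ℝ :=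
  X.filter (fun x => l.1 * x + l.2 ∈ X)

/-- The line through `(x, y)` and `(x', y')` as a pair (slope, intercept); for `x = x'` a junk
value. -/
noncomputable def lineThrough (x x' y y' : ℝ) : ℝ × ℝ :=
  ((y' - y) / (x' - x), y - (y' - y) / (x' - x) * x)

/-- The lines through two points of `X × X` that differ in both coordinates. -/
noncomputable def gridLines (X : Finset ℝ) : Finset (ℝ × ℝ) :=
  (X.offDiag ×ˢ X.offDiag).image (fun q => lineThrough q.1.1 q.1.2 q.2.1 q.2.2)

/-- The rank distance between the grid points `(x, y)` and `(z, w)`. -/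
noncomputable def rankDist (X : Finset ℝ) (x z y w : ℝ) : ℝ :=
  |(rankIn X x : ℝ) - rankIn X z| + |(rankIn X y : ℝ) - rankIn X w|

/-! ### Ranks and lines -/

lemma rankIn_lt {X : Finset ℝ} {x y : ℝ} (hx : x ∈ X) (h : x < y) : rankIn X x < rankIn X y := by
  apply Finset.card_lt_card
  refine ⟨?_, ?_⟩
  · intro z hz
    simp only [Finset.mem_filter] at hz ⊢
    exact ⟨hz.1, hz.2.trans h⟩
  · intro hh
    have := hh (Finset.mem_filter.2 ⟨hx, h⟩)
    simp at this

lemma rankIn_lt_card {X : Finset ℝ} {x : ℝ} (hx : x ∈ X) : rankIn X x < X.card := by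
  apply Finset.card_lt_card
  refine ⟨Finset.filter_subset _ _, ?_⟩
  intro hh
  have := hh hx
  simp at this

lemma rankIn_injOn (X : Finset ℝ) : Set.InjOn (rankIn X) X := by
  intro x hx y hy h
  rcases lt_trichotomy x y with h1 | h1 | h1
  · exact absurd h (rankIn_lt hx h1).ne
  · exact h1
  · exact absurd h (rankIn_lt hy h1).ne'

lemma lineThrough_left (x x' y y' : ℝ) :
    (lineThrough x x' y y').1 * x + (lineThrough x x' y y').2 = y := by
  simp [lineThrough]

lemma lineThrough_right {x x' : ℝ} (y y' : ℝ) (h : x ≠ x') :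
    (lineThrough x x' y y').1 * x' + (lineThrough x x' y y').2 = y' := by
  have : x' - x ≠ 0 := sub_ne_zero.2 h.symm
  simp only [lineThrough]
  field_simp
  ring

/-! ### Collinear triples in a grid -/

/-- Convexity for the consecutive gaps of `g` on `K`, in tangent line form:
`1/d² ≥ 3t² - 2t³d` for every gap `d > 0`. -/
lemma gap_sum_aux (g : ℝ → ℝ) (t : ℝ) (ht : 0 ≤ t) (K : Finset ℝ) :
    StrictMonoOn g K → (∀ x ∈ K, 0 ≤ g x) → ∀ M ∈ K, (∀ x ∈ K, x ≤ M) →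
      3 * t ^ 2 * ((K.card : ℝ) - 1) - 2 * t ^ 3 * g M
        ≤ ∑ p ∈ K.offDiag, 1 / (g p.1 - g p.2) ^ 2 := by
  induction K using Finset.induction_on_max with
  | empty => intro _ _ M hM; simp at hM
  | insert a s hs ih =>
    intro hg h0 M hM hmax
    have has : a ∉ s := fun h => lt_irrefl _ (hs a h)
    have hMa : M = a := by
      rcases Finset.mem_insert.1 hM with h | h
      · exact h
      · exact absurd (hmax a (Finset.mem_insert_self _ _)) (not_le.2 (hs M h))
    subst hMa
    rcases s.eq_empty_or_nonempty with rfl | hne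
    · have := h0 M hM
      simp
      positivity
    · have hm := s.max'_mem hne
      set m := s.max' hne with hmdef
      have ih' := ih (hg.mono (by simp)) (fun x hx => h0 x (Finset.mem_insert_of_mem hx)) m hm
        (fun x hx => s.le_max' x hx)
      have hlt : g m < g M := hg (by simp [hm]) (by simp) (hs m hm)
      have hsub : insert (M, m) s.offDiag ⊆ (insert M s).offDiag := by
        intro p hp
        rcases Finset.mem_insert.1 hp with rfl | hp
        · simp [hm, (hs m hm).ne']
        · simp only [Finset.mem_offDiag, Finset.mem_insert] at hp ⊢
          tauto
      have hnot : (M, m) ∉ s.offDiag := by simp [has]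
      have hle := Finset.sum_le_sum_of_subset_of_nonneg (f := fun p : ℝ × ℝ =>
        1 / (g p.1 - g p.2) ^ 2) hsub (fun _ _ _ => by positivity)
      rw [Finset.sum_insert hnot] at hle
      rw [Finset.card_insert_of_notMem has]
      push_cast
      have key : 3 * t ^ 2 - 2 * t ^ 3 * (g M - g m) ≤ 1 / (g M - g m) ^ 2 := by
        have hd : 0 < g M - g m := sub_pos.2 hlt
        generalize g M - g m = d at hd
        rw [le_div_iff₀ (by positivity)]
        -- with `u = t d`, the claim is `(u - 1)² (2u + 1) ≥ 0`
        have : 0 ≤ (t * d - 1) ^ 2 * (2 * (t * d) + 1) := by positivity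
        nlinarith
      simp only at hle
      linarith

/-- If `g` is strictly increasing on `K` with values in `[0, N]`, its consecutive gaps add up to at
most `N`, which forces a large sum of inverse squares of gaps. -/
lemma gap_sum (g : ℝ → ℝ) (N : ℝ) (hN : 0 < N) (K : Finset ℝ) (hK : K.Nonempty)
    (hg : StrictMonoOn g K) (h0 : ∀ x ∈ K, 0 ≤ g x) (h1 : ∀ x ∈ K, g x ≤ N) :
    ((K.card : ℝ) - 1) ^ 3 ≤ N ^ 2 * ∑ p ∈ K.offDiag, 1 / (g p.1 - g p.2) ^ 2 := by
  have hk : (0 : ℝ) ≤ (K.card : ℝ) - 1 := by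
    have : 1 ≤ K.card := hK.card_pos
    have : (1 : ℝ) ≤ K.card := by exact_mod_cast this
    linarith
  have h := gap_sum_aux g (((K.card : ℝ) - 1) / N) (by positivity) K hg h0 _ (K.max'_mem hK)
    (fun x hx => K.le_max' x hx)
  have hM := h1 _ (K.max'_mem hK)
  generalize (K.card : ℝ) - 1 = k at *
  generalize g (K.max' hK) = G at *
  have h2 : 2 * (k / N) ^ 3 * G ≤ 2 * (k / N) ^ 3 * N := by gcongr
  have h3 : k ^ 3 = N ^ 2 * (3 * (k / N) ^ 2 * k - 2 * (k / N) ^ 3 * N) := by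
    field_simp
    ring
  rw [h3]
  gcongr
  linarith

lemma linePts_card_sub_one_cube_le (X : Finset ℝ) (l : ℝ × ℝ) (hl : l.1 ≠ 0)
    (hne : (linePts X l).Nonempty) :
    (((linePts X l).card : ℝ) - 1) ^ 3 ≤ (2 * (X.card : ℝ)) ^ 2 *
      ∑ p ∈ (linePts X l).offDiag,
        1 / rankDist X p.1 p.2 (l.1 * p.1 + l.2) (l.1 * p.2 + l.2) ^ 2 := by
  have hmem : ∀ x ∈ linePts X l, x ∈ X ∧ l.1 * x + l.2 ∈ X := fun x hx => by
    simpa [linePts] using hx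
  have hn : (0 : ℝ) < X.card := by
    obtain ⟨x, hx⟩ := hne
    exact_mod_cast Finset.card_pos.2 ⟨x, (hmem x hx).1⟩
  have hr : ∀ x ∈ X, (rankIn X x : ℝ) ≤ X.card := fun x hx => by
    exact_mod_cast (rankIn_lt_card hx).le
  have hlt : ∀ x ∈ X, ∀ y, x < y → (rankIn X x : ℝ) < rankIn X y := fun x hx y h => by
    exact_mod_cast rankIn_lt hx h
  -- On a line the two coordinate ranks move together (slope `> 0`) or oppositely (slope `< 0`);
  -- `g` adds them with matching orientation, so `|g x - g y|` is the rank distance.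
  have main : ∀ g : ℝ → ℝ, (∀ x ∈ linePts X l, 0 ≤ g x) →
      (∀ x ∈ linePts X l, g x ≤ 2 * X.card) →
      (∀ x ∈ linePts X l, ∀ y ∈ linePts X l, x < y → g y - g x =
        rankDist X x y (l.1 * x + l.2) (l.1 * y + l.2)) →
      (((linePts X l).card : ℝ) - 1) ^ 3 ≤ (2 * (X.card : ℝ)) ^ 2 *
      ∑ p ∈ (linePts X l).offDiag,
        1 / rankDist X p.1 p.2 (l.1 * p.1 + l.2) (l.1 * p.2 + l.2) ^ 2 := by
    intro g g0 g1 g2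
    have hmono : StrictMonoOn g (linePts X l) := by
      intro x hx y hy hxy
      have h1 := g2 x hx y hy hxy
      have h2 := hlt x (hmem x hx).1 y hxy
      have h3 : 0 < |(rankIn X x : ℝ) - rankIn X y| := abs_pos.2 (by linarith)
      have h4 : 0 < rankDist X x y (l.1 * x + l.2) (l.1 * y + l.2) := by
        unfold rankDist; positivity
      linarith
    have := gap_sum g (2 * X.card) (by positivity) (linePts X l) hne hmono g0 g1
    refine this.trans (le_of_eq ?_)
    congr 1
    refine Finset.sum_congr rfl fun p hp => ?_
    obtain ⟨h1, h2, h3⟩ := Finset.mem_offDiag.1 hp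
    congr 1
    rcases lt_or_gt_of_ne h3 with h | h
    · rw [← g2 _ h1 _ h2 h]; ring
    · have := g2 _ h2 _ h1 h
      unfold rankDist at *
      rw [this, abs_sub_comm, abs_sub_comm (rankIn X (l.1 * p.2 + l.2) : ℝ)]
  rcases lt_or_gt_of_ne hl with hneg | hpos
  · refine main (fun x => (rankIn X x : ℝ) + (X.card - rankIn X (l.1 * x + l.2))) ?_ ?_ ?_
    · intro x hx
      have := hr _ (hmem x hx).2
      have h2 : (0 : ℝ) ≤ rankIn X x := by positivity
      linarith
    · intro x hx
      have := hr _ (hmem x hx).1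
      have h2 : (0 : ℝ) ≤ rankIn X (l.1 * x + l.2) := by positivity
      linarith
    · intro x hx y hy hxy
      have h1 := hlt _ (hmem x hx).1 _ hxy
      have h2 := hlt _ (hmem y hy).2 (l.1 * x + l.2) (by nlinarith)
      unfold rankDist
      rw [abs_of_neg (by linarith), abs_of_pos (by linarith)]
      ring
  · refine main (fun x => (rankIn X x : ℝ) + rankIn X (l.1 * x + l.2)) ?_ ?_ ?_
    · intro x hx
      positivity
    · intro x hx
      have := hr _ (hmem x hx).1
      have := hr _ (hmem x hx).2
      linarith
    · intro x hx y hy hxy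
      have h1 := hlt _ (hmem x hx).1 _ hxy
      have h2 := hlt _ (hmem x hx).2 (l.1 * y + l.2) (by nlinarith)
      unfold rankDist
      rw [abs_of_neg (by linarith), abs_of_neg (by linarith)]
      ring

lemma gridLines_spec {X : Finset ℝ} {l : ℝ × ℝ} (hl : l ∈ gridLines X) :
    l.1 ≠ 0 ∧ 2 ≤ (linePts X l).card := by
  obtain ⟨⟨⟨x, x'⟩, ⟨y, y'⟩⟩, hq, rfl⟩ := Finset.mem_image.1 hl
  simp only [Finset.mem_product, Finset.mem_offDiag] at hq ⊢
  obtain ⟨⟨hx, hx', hxx⟩, hy, hy', hyy⟩ := hq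
  refine ⟨?_, ?_⟩
  · simp only [lineThrough]
    exact div_ne_zero (sub_ne_zero.2 hyy.symm) (sub_ne_zero.2 hxx.symm)
  · rw [← Finset.card_pair hxx]
    apply Finset.card_le_card
    intro z hz
    simp only [Finset.mem_insert, Finset.mem_singleton] at hz
    rcases hz with rfl | rfl
    · simp only [linePts, Finset.mem_filter, lineThrough_left]; exact ⟨hx, hy⟩
    · simp only [linePts, Finset.mem_filter, lineThrough_right _ _ hxx]
      exact ⟨by assumption, by assumption⟩

/-- Two distinct points lie on one line only, so pairs of points on common grid lines are pairs of
grid points counted once. -/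
lemma sum_lines_le (X : Finset ℝ) :
    ∑ l ∈ gridLines X, ∑ p ∈ (linePts X l).offDiag,
        1 / rankDist X p.1 p.2 (l.1 * p.1 + l.2) (l.1 * p.2 + l.2) ^ 2
      ≤ ∑ q ∈ X.offDiag ×ˢ X.offDiag, 1 / rankDist X q.1.1 q.1.2 q.2.1 q.2.2 ^ 2 := by
  rw [Finset.sum_sigma']
  set φ : (Σ _ : ℝ × ℝ, ℝ × ℝ) → (ℝ × ℝ) × (ℝ × ℝ) := fun s =>
    (s.2, (s.1.1 * s.2.1 + s.1.2, s.1.1 * s.2.2 + s.1.2)) with hφ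
  have hinj : Set.InjOn φ
      ((gridLines X).sigma fun l => (linePts X l).offDiag : Finset (Σ _ : ℝ × ℝ, ℝ × ℝ)) := by
    rintro ⟨⟨m, c⟩, ⟨x, y⟩⟩ h1 ⟨⟨m', c'⟩, ⟨x', y'⟩⟩ h2 h
    simp only [hφ, Prod.mk.injEq] at h
    obtain ⟨⟨rfl, rfl⟩, h3, h4⟩ := h
    have hxy : x ≠ y := by
      have := (Finset.mem_offDiag.1 (Finset.mem_sigma.1 h1).2).2.2
      exact this
    have hm : m = m' := by
      have : (m - m') * (x - y) = 0 := by linarith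
      rcases mul_eq_zero.1 this with h | h
      · linarith
      · exact absurd (sub_eq_zero.1 h) hxy
    subst hm
    have : c = c' := by linarith
    subst this
    rfl
  rw [← Finset.sum_image (f := fun q : (ℝ × ℝ) × (ℝ × ℝ) =>
    1 / rankDist X q.1.1 q.1.2 q.2.1 q.2.2 ^ 2) hinj]
  apply Finset.sum_le_sum_of_subset_of_nonneg
  · intro q hq
    obtain ⟨⟨l, ⟨x, y⟩⟩, hs, rfl⟩ := Finset.mem_image.1 hq
    obtain ⟨hl, hp⟩ := Finset.mem_sigma.1 hs
    obtain ⟨h1, h2, h3⟩ := Finset.mem_offDiag.1 hp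
    simp only [linePts, Finset.mem_filter] at h1 h2 h3
    simp only [hφ, Finset.mem_product, Finset.mem_offDiag]
    refine ⟨⟨h1.1, h2.1, h3⟩, h1.2, h2.2, ?_⟩
    intro h
    have : l.1 * (x - y) = 0 := by linarith
    rcases mul_eq_zero.1 this with h | h
    · exact (gridLines_spec hl).1 h
    · exact h3 (sub_eq_zero.1 h)
  · intros; positivity

lemma sum_abs_sub_le (n i : ℕ) (hi : i < n) (F : ℝ → ℝ) (hF : ∀ u, 0 ≤ F u) :
    ∑ j ∈ (Finset.range n).filter (· ≠ i), F |(i : ℝ) - j|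
      ≤ 2 * ∑ u ∈ Finset.range n, F ((u : ℝ) + 1) := by
  have hsplit : (Finset.range n).filter (· ≠ i) = Finset.range i ∪ Finset.Ico (i + 1) n := by
    ext j; simp only [Finset.mem_filter, Finset.mem_range, Finset.mem_union, Finset.mem_Ico]; omega
  have hdisj : Disjoint (Finset.range i) (Finset.Ico (i + 1) n) := by
    rw [Finset.disjoint_left]; intro j; simp only [Finset.mem_range, Finset.mem_Ico]; omega
  rw [hsplit, Finset.sum_union hdisj, two_mul]
  apply add_le_add
  · rw [← Finset.sum_range_reflect]
    refine le_trans (le_of_eq ?_) (Finset.sum_le_sum_of_subset_of_nonneg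
      (Finset.range_mono hi.le) (fun _ _ _ => hF _))
    refine Finset.sum_congr rfl fun j hj => ?_
    have hj := Finset.mem_range.1 hj
    congr 1
    have : ((i - 1 - j : ℕ) : ℝ) = i - 1 - j := by
      rw [Nat.cast_sub (by omega), Nat.cast_sub (by omega)]; simp
    rw [this, show (i : ℝ) - (i - 1 - j) = j + 1 by ring, abs_of_pos (by positivity)]
  · rw [Finset.sum_Ico_eq_sum_range]
    refine le_trans (le_of_eq ?_) (Finset.sum_le_sum_of_subset_of_nonneg
      (Finset.range_mono (show n - (i + 1) ≤ n by omega)) (fun _ _ _ => hF _))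
    refine Finset.sum_congr rfl fun j hj => ?_
    congr 1
    push_cast
    rw [show (i : ℝ) - (i + 1 + j) = -(j + 1) by ring, abs_neg, abs_of_pos (by positivity)]

lemma sum_inv_sq_shift_le (D : ℝ) (hD : 0 < D) (n : ℕ) :
    ∑ v ∈ Finset.range n, 1 / (D + ((v : ℝ) + 1)) ^ 2 ≤ 1 / D := by
  have h : ∑ v ∈ Finset.range n, 1 / (D + ((v : ℝ) + 1)) ^ 2 ≤ 1 / D - 1 / (D + n) := by
    induction n with
    | zero => simp
    | succ n ih =>
      rw [Finset.sum_range_succ]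
      have : 1 / (D + ((n : ℝ) + 1)) ^ 2 ≤ 1 / (D + n) - 1 / (D + ((n : ℝ) + 1)) := by
        rw [div_sub_div _ _ (by positivity) (by positivity), div_le_div_iff₀ (by positivity)
          (by positivity)]
        have : 0 < D + n := by positivity
        nlinarith
      push_cast
      linarith
  have : 0 ≤ 1 / (D + n) := by positivity
  linarith

lemma sum_offDiag_rank_le (X : Finset ℝ) (F : ℝ → ℝ) (hF : ∀ u, 0 ≤ F u) :
    ∑ p ∈ X.offDiag, F |(rankIn X p.1 : ℝ) - rankIn X p.2|
      ≤ 2 * X.card * ∑ u ∈ Finset.range X.card, F ((u : ℝ) + 1) := by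
  have h1 : ∑ p ∈ X.offDiag, F |(rankIn X p.1 : ℝ) - rankIn X p.2|
      = ∑ x ∈ X, ∑ y ∈ X.filter (· ≠ x), F |(rankIn X x : ℝ) - rankIn X y| := by
    rw [Finset.sum_sigma']
    refine Finset.sum_bij' (fun p _ => ⟨p.1, p.2⟩) (fun s _ => (s.1, s.2)) ?_ ?_ ?_ ?_ ?_
    · intro p hp
      simp only [Finset.mem_offDiag, Finset.mem_sigma, Finset.mem_filter] at hp ⊢
      exact ⟨hp.1, hp.2.1, hp.2.2.symm⟩
    · intro p hp
      simp only [Finset.mem_offDiag, Finset.mem_sigma, Finset.mem_filter] at hp ⊢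
      exact ⟨hp.1, hp.2.1, hp.2.2.symm⟩
    · intros; rfl
    · intros; rfl
    · intros; rfl
  rw [h1]
  calc _ ≤ ∑ x ∈ X, 2 * ∑ u ∈ Finset.range X.card, F ((u : ℝ) + 1) := by
        refine Finset.sum_le_sum fun x hx => ?_
        refine le_trans ?_ (sum_abs_sub_le X.card (rankIn X x) (rankIn_lt_card hx) F hF)
        have hinj : Set.InjOn (rankIn X) (X.filter (· ≠ x) : Finset ℝ) :=
          (rankIn_injOn X).mono (Finset.coe_subset.2 (Finset.filter_subset _ _))
        rw [← Finset.sum_image (f := fun j : ℕ => F |(rankIn X x : ℝ) - j|) hinj]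
        apply Finset.sum_le_sum_of_subset_of_nonneg
        · intro j hj
          obtain ⟨y, hy, rfl⟩ := Finset.mem_image.1 hj
          simp only [Finset.mem_filter] at hy
          simp only [Finset.mem_filter, Finset.mem_range]
          exact ⟨rankIn_lt_card hy.1, fun h => hy.2 (rankIn_injOn X hy.1 hx h)⟩
        · intros; exact hF _
    _ = _ := by rw [Finset.sum_const, nsmul_eq_mul]; ring

lemma sum_rank_dist_le (X : Finset ℝ) :
    ∑ q ∈ X.offDiag ×ˢ X.offDiag, 1 / rankDist X q.1.1 q.1.2 q.2.1 q.2.2 ^ 2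
      ≤ 4 * (X.card : ℝ) ^ 2 * ∑ u ∈ Finset.range X.card, 1 / ((u : ℝ) + 1) := by
  rw [Finset.sum_product]
  calc _ ≤ ∑ p ∈ X.offDiag, 2 * X.card * (1 / |(rankIn X p.1 : ℝ) - rankIn X p.2|) := by
        refine Finset.sum_le_sum fun p hp => ?_
        obtain ⟨h1, h2, h3⟩ := Finset.mem_offDiag.1 hp
        have hD : 0 < |(rankIn X p.1 : ℝ) - rankIn X p.2| := by
          rw [abs_pos, sub_ne_zero]
          intro h
          exact h3 (rankIn_injOn X h1 h2 (by exact_mod_cast h))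
        unfold rankDist
        simp only
        generalize |(rankIn X p.1 : ℝ) - rankIn X p.2| = D at hD
        refine (sum_offDiag_rank_le X (fun u => 1 / (D + u) ^ 2)
          (fun u => by positivity)).trans ?_
        have := sum_inv_sq_shift_le D hD X.card
        gcongr
    _ = 2 * X.card * ∑ p ∈ X.offDiag, (1 / |(rankIn X p.1 : ℝ) - rankIn X p.2|) := by
        rw [Finset.mul_sum]
    _ ≤ 2 * X.card * (2 * X.card * ∑ u ∈ Finset.range X.card, 1 / |(u : ℝ) + 1|) := by
        gcongr
        have := sum_offDiag_rank_le X (fun u => 1 / |u|) (fun u => by positivity)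
        simpa only [abs_abs] using this
    _ = _ := by
        have : ∀ u : ℕ, |(u : ℝ) + 1| = u + 1 := fun u => abs_of_pos (by positivity)
        simp only [this]
        ring

lemma sum_one_div_le_log (n : ℕ) :
    ∑ u ∈ Finset.range n, 1 / ((u : ℝ) + 1) ≤ 1 + Real.log n := by
  have := harmonic_le_one_add_log n
  simpa [harmonic] using this

/-- The left side counts the ordered collinear triples, repetitions allowed, on the lines that are
not parallel to an axis and contain at least two points of `X × X`. -/
lemma sum_card_linePts_cube_le (X : Finset ℝ) :
    ∑ l ∈ gridLines X, ((linePts X l).card : ℝ) ^ 3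
      ≤ 128 * (X.card : ℝ) ^ 4 * (1 + Real.log X.card) := by
  have h1 : ∑ l ∈ gridLines X, ((linePts X l).card : ℝ) ^ 3 ≤
      ∑ l ∈ gridLines X, 8 * ((2 * (X.card : ℝ)) ^ 2 * ∑ p ∈ (linePts X l).offDiag,
        1 / rankDist X p.1 p.2 (l.1 * p.1 + l.2) (l.1 * p.2 + l.2) ^ 2) := by
    refine Finset.sum_le_sum fun l hl => ?_
    obtain ⟨hl0, hk⟩ := gridLines_spec hl
    have h := linePts_card_sub_one_cube_le X l hl0 (Finset.card_pos.1 (by omega))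
    have hk' : (2 : ℝ) ≤ (linePts X l).card := by exact_mod_cast hk
    have h2 : ((linePts X l).card : ℝ) ^ 3 ≤ (2 * (((linePts X l).card : ℝ) - 1)) ^ 3 := by
      gcongr; linarith
    calc _ ≤ _ := h2
      _ = 8 * (((linePts X l).card : ℝ) - 1) ^ 3 := by ring
      _ ≤ _ := by gcongr
  refine h1.trans ?_
  rw [← Finset.mul_sum, ← Finset.mul_sum]
  have h2 := (sum_lines_le X).trans (sum_rank_dist_le X)
  have h3 := sum_one_div_le_log X.card
  calc _ ≤ 8 * ((2 * (X.card : ℝ)) ^ 2 * (4 * (X.card : ℝ) ^ 2 * (1 + Real.log X.card))) := by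
        gcongr
        refine h2.trans ?_
        gcongr
    _ = _ := by ring

/-! ### From product collisions to collinear triples -/

/-- Cauchy–Schwarz for the fibres of `f`. -/
lemma card_sq_le_collisions {α β : Type*} [DecidableEq α] [DecidableEq β] (V : Finset α)
    (T : Finset β) (f : α → β) (hf : ∀ v ∈ V, f v ∈ T) :
    (V.card : ℝ) ^ 2 ≤ T.card * (((V ×ˢ V).filter (fun p => f p.1 = f p.2)).card : ℝ) := by
  have h1 : V.card = ∑ t ∈ T, (V.filter (fun v => f v = t)).card :=
    Finset.card_eq_sum_card_fiberwise hf
  have h2 : ((V ×ˢ V).filter (fun p => f p.1 = f p.2)).card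
      = ∑ t ∈ T, (V.filter (fun v => f v = t)).card ^ 2 := by
    rw [Finset.card_eq_sum_card_fiberwise (f := fun p => f p.1) (t := T)]
    · refine Finset.sum_congr rfl fun t _ => ?_
      rw [sq, ← Finset.card_product]
      congr 1
      ext ⟨v, w⟩
      simp only [Finset.mem_filter, Finset.mem_product]
      constructor
      · rintro ⟨⟨⟨hv, hw⟩, h⟩, rfl⟩; exact ⟨⟨hv, rfl⟩, hw, h.symm⟩
      · rintro ⟨⟨hv, rfl⟩, hw, h⟩; exact ⟨⟨⟨hv, hw⟩, h.symm⟩, rfl⟩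
    · intro p hp
      have hp : p ∈ (V ×ˢ V).filter (fun p => f p.1 = f p.2) := hp
      exact hf _ (Finset.mem_product.1 (Finset.mem_filter.1 hp).1).1
  rw [h1, h2]
  push_cast
  exact sq_sum_le_card_mul_sum_sq

/-- The quadruples `((b, c), (a, d))` of `A` with `ab + 1` and `cd + 1` nonzero. -/
noncomputable def goodQuads (A : Finset ℝ) : Finset ((ℝ × ℝ) × (ℝ × ℝ)) :=
  ((A ×ˢ A) ×ˢ (A ×ˢ A)).filter (fun v => v.2.1 * v.1.1 + 1 ≠ 0 ∧ v.1.2 * v.2.2 + 1 ≠ 0)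

/-- The map `((b, c), (a, d)) ↦ ((b, c), (ab+1)(cd+1))`. -/
noncomputable def quadVal (v : (ℝ × ℝ) × (ℝ × ℝ)) : (ℝ × ℝ) × ℝ :=
  (v.1, (v.2.1 * v.1.1 + 1) * (v.1.2 * v.2.2 + 1))

/-- For each `b` at most one `a` satisfies `ab + 1 = 0`, so at least `|A|² (|A| - 1)² ≥ |A|⁴ / 4`
quadruples are good. -/
lemma card_goodQuads (A : Finset ℝ) (h0 : (0 : ℝ) ∉ A) (h2 : 2 ≤ A.card) :
    (A.card : ℝ) ^ 4 / 4 ≤ (goodQuads A).card := by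
  set G : Finset (ℝ × ℝ) := (A ×ˢ A).filter (fun p => p.1 * p.2 + 1 ≠ 0) with hG
  have hGc : (A.card : ℝ) ^ 2 / 2 ≤ G.card := by
    have hbad : ((A ×ˢ A).filter (fun p => ¬ (p.1 * p.2 + 1 ≠ 0))).card ≤ A.card := by
      apply Finset.card_le_card_of_injOn Prod.fst
      · intro p hp
        exact (Finset.mem_product.1 (Finset.mem_filter.1 hp).1).1
      · rintro ⟨x, y⟩ hp ⟨x', y'⟩ hq h
        simp only [Finset.coe_filter, Set.mem_ofPred_eq, Finset.mem_product, not_not] at hp hq h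
        subst h
        have hx : x ≠ 0 := fun h => h0 (h ▸ hp.1.1)
        have : x * (y - y') = 0 := by linarith
        rcases mul_eq_zero.1 this with h | h
        · exact absurd h hx
        · rw [sub_eq_zero.1 h]
    have hsum := Finset.card_filter_add_card_filter_not (s := A ×ˢ A)
      (fun p : ℝ × ℝ => p.1 * p.2 + 1 ≠ 0)
    rw [Finset.card_product] at hsum
    have h3 : A.card * A.card ≤ G.card + A.card := by
      rw [hG]; omega
    have h4 : (A.card : ℝ) * A.card ≤ G.card + A.card := by exact_mod_cast h3
    have h5 : (2 : ℝ) ≤ A.card := by exact_mod_cast h2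
    nlinarith
  have hle : G.card * G.card ≤ (goodQuads A).card := by
    rw [← Finset.card_product]
    apply Finset.card_le_card_of_injOn (fun q => ((q.1.2, q.2.1), (q.1.1, q.2.2)))
    · rintro ⟨⟨a, b⟩, ⟨c, d⟩⟩ hq
      simp only [hG, Finset.coe_product, Finset.coe_filter, Set.mem_prod, Set.mem_ofPred_eq,
        Finset.mem_product] at hq
      simp only [goodQuads, Finset.coe_filter, Set.mem_ofPred_eq, Finset.mem_product]
      tauto
    · rintro ⟨⟨a, b⟩, ⟨c, d⟩⟩ _ ⟨⟨a', b'⟩, ⟨c', d'⟩⟩ _ h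
      simp only [Prod.mk.injEq] at h ⊢
      tauto
  calc (A.card : ℝ) ^ 4 / 4 = (A.card : ℝ) ^ 2 / 2 * ((A.card : ℝ) ^ 2 / 2) := by ring
    _ ≤ (G.card : ℝ) * G.card := by gcongr
    _ ≤ (goodQuads A).card := by exact_mod_cast hle

/-- The coordinates of the grid in which collisions become collinear triples. -/
noncomputable def gridSet (A : Finset ℝ) : Finset ℝ := A ∪ A.image (fun b => -1 / b)

lemma card_gridSet_le (A : Finset ℝ) : (gridSet A).card ≤ 2 * A.card := by
  have h1 := Finset.card_union_le A (A.image (fun b => -1 / b))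
  have h2 : (A.image (fun b => -1 / b)).card ≤ A.card := Finset.card_image_le
  unfold gridSet
  omega

/-- A nontrivial collision `(ab+1)(cd+1) = (a'b+1)(cd'+1)` is determined by the line through
`(a, d')` and `(a', d)` and the abscissae of these points and of `(-1/b, -1/c)` on it. -/
lemma card_collisions_le (A : Finset ℝ) (h0 : (0 : ℝ) ∉ A) :
    ((((goodQuads A) ×ˢ (goodQuads A)).filter (fun p => quadVal p.1 = quadVal p.2)).card : ℝ)
      ≤ (A.card : ℝ) ^ 4 + ∑ l ∈ gridLines (gridSet A), ((linePts (gridSet A) l).card : ℝ) ^ 3 := by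
  set C := ((goodQuads A) ×ˢ (goodQuads A)).filter (fun p => quadVal p.1 = quadVal p.2) with hC
  have hsum := Finset.card_filter_add_card_filter_not (s := C) (fun p => p.1 = p.2)
  have hdiag : (C.filter (fun p => p.1 = p.2)).card ≤ A.card ^ 4 := by
    have : A.card ^ 4 = ((A ×ˢ A) ×ˢ (A ×ˢ A)).card := by
      simp only [Finset.card_product]; ring
    rw [this]
    apply Finset.card_le_card_of_injOn Prod.fst
    · intro p hp
      have hp : p ∈ C.filter (fun p => p.1 = p.2) := hp
      have := (Finset.mem_product.1 (Finset.mem_filter.1 (Finset.mem_filter.1 hp).1).1).1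
      exact (Finset.mem_filter.1 this).1
    · intro p hp q hq h
      have hp : p ∈ C.filter (fun p => p.1 = p.2) := hp
      have hq : q ∈ C.filter (fun p => p.1 = p.2) := hq
      have h1 := (Finset.mem_filter.1 hp).2
      have h2 := (Finset.mem_filter.1 hq).2
      exact Prod.ext h (by rw [← h1, ← h2, h])
  have hoff : (C.filter (fun p => ¬ p.1 = p.2)).card
      ≤ ∑ l ∈ gridLines (gridSet A), (linePts (gridSet A) l).card ^ 3 := by
    have : ∑ l ∈ gridLines (gridSet A), (linePts (gridSet A) l).card ^ 3
        = ((gridLines (gridSet A)).sigma fun l => linePts (gridSet A) l ×ˢ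
            (linePts (gridSet A) l ×ˢ linePts (gridSet A) l)).card := by
      rw [Finset.card_sigma]
      refine Finset.sum_congr rfl fun l _ => ?_
      simp only [Finset.card_product]; ring
    rw [this]
    have hspec : ∀ b c a d a' d' b' c' : ℝ,
        (((b, c), (a, d)), ((b', c'), (a', d'))) ∈ C.filter (fun p => ¬ p.1 = p.2) →
        b' = b ∧ c' = c ∧ b ≠ 0 ∧ c ≠ 0 ∧ a ≠ a' ∧ d' ≠ d ∧ a ∈ A ∧ a' ∈ A ∧ b ∈ A ∧ c ∈ A ∧
          d ∈ A ∧ d' ∈ A ∧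
          (lineThrough a a' d' d).1 * (-1 / b) + (lineThrough a a' d' d).2 = -1 / c := by
      intro b c a d a' d' b' c' h
      simp only [hC, goodQuads, quadVal, Finset.mem_filter, Finset.mem_product,
        Prod.mk.injEq] at h
      obtain ⟨⟨⟨⟨⟨⟨hb, hc⟩, ha, hd⟩, hn1, hn2⟩, ⟨⟨hb', hc'⟩, ha', hd'⟩, hn3, hn4⟩,
        ⟨hbb, hcc⟩, heq⟩, hne⟩ := h
      subst hbb hcc
      have hb0 : b ≠ 0 := fun h => h0 (h ▸ hb)
      have hc0 : c ≠ 0 := fun h => h0 (h ▸ hc)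
      have haa : a ≠ a' := by
        rintro rfl
        have h1 := mul_left_cancel₀ hn1 heq
        have h2 : d = d' := mul_left_cancel₀ hc0 (by linarith)
        exact hne ⟨⟨rfl, rfl⟩, rfl, h2⟩
      have hdd : d' ≠ d := by
        rintro rfl
        have h1 := mul_right_cancel₀ hn2 heq
        exact haa (mul_right_cancel₀ hb0 (by linarith))
      refine ⟨rfl, rfl, hb0, hc0, haa, hdd, ha, ha', hb, hc, hd, hd', ?_⟩
      have : a' - a ≠ 0 := sub_ne_zero.2 haa.symm
      simp only [lineThrough]
      field_simp
      linear_combination -heq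
    apply Finset.card_le_card_of_injOn (fun p => ⟨lineThrough p.1.2.1 p.2.2.1 p.2.2.2 p.1.2.2,
      (p.1.2.1, (p.2.2.1, -1 / p.1.1.1))⟩)
    · rintro ⟨⟨⟨b, c⟩, ⟨a, d⟩⟩, ⟨⟨b', c'⟩, ⟨a', d'⟩⟩⟩ hp
      obtain ⟨rfl, rfl, hb0, hc0, haa, hdd, ha, ha', hb, hc, hd, hd', hline⟩ :=
        hspec _ _ _ _ _ _ _ _ hp
      have hA : ∀ x ∈ A, x ∈ gridSet A := fun x hx => Finset.mem_union_left _ hx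
      have hI : ∀ x ∈ A, -1 / x ∈ gridSet A := fun x hx =>
        Finset.mem_union_right _ (Finset.mem_image_of_mem _ hx)
      refine Finset.mem_coe.2 (Finset.mem_sigma.2 ⟨?_, ?_⟩)
      · refine Finset.mem_image.2 ⟨((a, a'), (d', d)), ?_, rfl⟩
        simp only [Finset.mem_product, Finset.mem_offDiag]
        exact ⟨⟨hA _ ha, hA _ ha', haa⟩, hA _ hd', hA _ hd, hdd⟩
      · simp only [Finset.mem_product, linePts, Finset.mem_filter]
        rw [lineThrough_left, lineThrough_right _ _ haa, hline]
        exact ⟨⟨hA _ ha, hA _ hd'⟩, ⟨hA _ ha', hA _ hd⟩, hI _ hb, hI _ hc⟩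
    · rintro ⟨⟨⟨b, c⟩, ⟨a, d⟩⟩, ⟨⟨b1, c1⟩, ⟨a', d'⟩⟩⟩ hp
        ⟨⟨⟨e, f⟩, ⟨x, y⟩⟩, ⟨⟨e1, f1⟩, ⟨x', y'⟩⟩⟩ hq h
      obtain ⟨rfl, rfl, hb0, hc0, haa, hdd, -, -, -, -, -, -, hline⟩ :=
        hspec _ _ _ _ _ _ _ _ hp
      obtain ⟨rfl, rfl, he0, hf0, hxx, hyy, -, -, -, -, -, -, hline'⟩ :=
        hspec _ _ _ _ _ _ _ _ hq
      simp only [Sigma.mk.injEq, heq_eq_eq, Prod.mk.injEq] at h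
      obtain ⟨hl, rfl, rfl, hbe⟩ := h
      have h1 : d' = y' := by
        rw [← lineThrough_left a a' d' d, hl, lineThrough_left]
      have h2 : d = y := by
        rw [← lineThrough_right d' d haa, hl, lineThrough_right _ _ haa]
      have h3 : -1 / c1 = -1 / f1 := by rw [← hline, ← hline', hl, hbe]
      have inv : ∀ u v : ℝ, u ≠ 0 → v ≠ 0 → -1 / u = -1 / v → u = v := by
        intro u v hu hv h
        rw [div_eq_div_iff hu hv] at h
        linarith
      have h4 := inv _ _ hb0 he0 hbe
      have h5 := inv _ _ hc0 hf0 h3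
      subst h1 h2 h4 h5
      rfl
  have : C.card ≤ A.card ^ 4 +
      ∑ l ∈ gridLines (gridSet A), (linePts (gridSet A) l).card ^ 3 := by omega
  exact_mod_cast this

theorem two_products_and_shifts_quadratic :
    ∃ c : ℝ, 0 < c ∧
      ∀ A : Finset ℝ, (0 : ℝ) ∉ A → 2 ≤ A.card →
        c * (A.card : ℝ) ^ 2 / Real.log A.card ≤
          ((prodShiftOne A * prodShiftOne A).card : ℝ) := by
  -- `131104 = 16 * 8194`, where `8194 |A|⁴ log |A|` bounds the number of collisions
  refine ⟨1 / 131104, by norm_num, fun A h0 h2 => ?_⟩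
  set S := prodShiftOne A * prodShiftOne A with hS
  have hn2 : (2 : ℝ) ≤ A.card := by exact_mod_cast h2
  have hlog2 : Real.log 2 ≤ Real.log A.card := Real.log_le_log (by norm_num) hn2
  have hl2 := Real.log_two_gt_d9
  have hlog : 0 < Real.log A.card := by linarith
  have hmaps : ∀ v ∈ goodQuads A, quadVal v ∈ (A ×ˢ A) ×ˢ S := by
    rintro ⟨⟨b, c⟩, ⟨a, d⟩⟩ hv
    simp only [goodQuads, Finset.mem_filter, Finset.mem_product] at hv
    obtain ⟨⟨⟨hb, hc⟩, ha, hd⟩, -⟩ := hv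
    simp only [quadVal, Finset.mem_product]
    refine ⟨⟨hb, hc⟩, Finset.mul_mem_mul ?_ ?_⟩
    · exact Finset.mem_image₂_of_mem (f := fun x y : ℝ => x * y + 1) ha hb
    · exact Finset.mem_image₂_of_mem (f := fun x y : ℝ => x * y + 1) hc hd
  have hCS := card_sq_le_collisions (goodQuads A) ((A ×ˢ A) ×ˢ S) quadVal hmaps
  have hV := card_goodQuads A h0 h2
  have hE := card_collisions_le A h0
  have hT := sum_card_linePts_cube_le (gridSet A)
  have hX : ((gridSet A).card : ℝ) ≤ 2 * A.card := by exact_mod_cast card_gridSet_le A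
  have hX0 : (0 : ℝ) < (gridSet A).card := by
    have : A.card ≤ (gridSet A).card := Finset.card_le_card Finset.subset_union_left
    exact_mod_cast (by omega : 0 < (gridSet A).card)
  have hlogX : Real.log (gridSet A).card ≤ 2 * Real.log A.card := by
    have h1 := Real.log_le_log hX0 hX
    rw [Real.log_mul (by norm_num) (by positivity)] at h1
    linarith
  have hT' : ∑ l ∈ gridLines (gridSet A), ((linePts (gridSet A) l).card : ℝ) ^ 3
      ≤ 128 * (2 * (A.card : ℝ)) ^ 4 * (4 * Real.log A.card) := by
    refine hT.trans ?_
    have : 1 + Real.log (gridSet A).card ≤ 4 * Real.log A.card := by linarith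
    calc _ ≤ 128 * ((gridSet A).card : ℝ) ^ 4 * (4 * Real.log A.card) := by gcongr
      _ ≤ _ := by gcongr
  rw [Finset.card_product, Finset.card_product] at hCS
  push_cast at hCS
  have hs : (0 : ℝ) ≤ S.card := by positivity
  generalize ((((goodQuads A) ×ˢ (goodQuads A)).filter
    (fun p => quadVal p.1 = quadVal p.2)).card : ℝ) = E at hCS hE
  generalize ((goodQuads A).card : ℝ) = V at hCS hV
  generalize Real.log A.card = L at *
  generalize (S.card : ℝ) = s at *
  generalize (A.card : ℝ) = n at *
  have hn : 0 < n := by linarith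
  have hE' : E ≤ 8194 * n ^ 4 * L := by
    have : n ^ 4 * 1 ≤ n ^ 4 * (2 * L) := by gcongr; linarith
    nlinarith
  have h1 : (n ^ 4 / 4) ^ 2 ≤ n * n * s * (8194 * n ^ 4 * L) := by
    calc _ ≤ V ^ 2 := by gcongr
      _ ≤ _ := hCS
      _ ≤ _ := by gcongr
  rw [div_le_iff₀ hlog]
  have h3 : n ^ 6 * (1 / 131104 * n ^ 2) ≤ n ^ 6 * (s * L) := by nlinarith
  exact le_of_mul_le_mul_left h3 (by positivity)
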